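/- Let R be a commutative ring and x \in R. For each natural number n \ge 1, define the 2^n \times 2^n matrix S_n(x) recursively by S_1(x) = [[1, 0], [x, 1]] and S_{n+1}(x) = S_1(x) \otimes S_n(x) (Kronecker product, with rows and columns of the product indexed by Fin 2 \times Fin 2^n and reindexed to Fin 2^{n+1} via the equivalence sending (a, b) to a \cdot 2^n + b). Then for all indices 0 \le j, k \le 2^n - 1, the (j, k) entry of S_n(x) equals x^{s(j-k)} if k \le j and s(k) + s(j-k) = s(j) (i.e., the pair (k, j-k) is carry-free), and equals 0 otherwise. -/

import Mathlib

open Matrix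

/-- `s k` is the sum of the binary digits of `k`. -/
def s (k : ℕ) : ℕ := (Nat.digits 2 k).sum

/-- The equivalence `Fin 2 × Fin (2^n) ≃ Fin (2^(n+1))` sending `(a, b)` to
`a * 2^n + b`. -/
def splitEquiv (n : ℕ) : Fin 2 × Fin (2 ^ n) ≃ Fin (2 ^ (n + 1)) :=
  (finProdFinEquiv.trans (finCongr (by rw [pow_succ, Nat.mul_comm])))

/-- The Sierpinski matrices: `sierpinskiMat x 0` is the `1 × 1` identity matrix,
`sierpinskiMat x 1 = [[1, 0], [x, 1]]` (up to reindexing), and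
`sierpinskiMat x (n+1) = S₁(x) ⊗ sierpinskiMat x n` (Kronecker product), with
rows and columns reindexed from `Fin 2 × Fin (2^n)` to `Fin (2^(n+1))` via
`(a, b) ↦ a * 2^n + b`. -/
def sierpinskiMat {R : Type*} [CommRing R] (x : R) : (n : ℕ) → Matrix (Fin (2 ^ n)) (Fin (2 ^ n)) R
  | 0 => 1
  | n + 1 =>
    Matrix.reindex (splitEquiv n) (splitEquiv n)
      (Matrix.kroneckerMap (· * ·) !![1, 0; x, 1] (sierpinskiMat x n))

/-! The matrix `Sₙ(x)` is Pascal's triangle modulo 2, with each odd entry `j.choose k` replaced by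
`x ^ s (j - k)`. By Kummer's theorem, `j.choose k` is odd exactly when `(k, j - k)` is carry-free.
By Lucas' theorem, the parity of `j.choose k` is multiplicative under cutting the binary expansions
of `j` and `k` at the same position, and then so is the whole entry; this is the Kronecker product
recursion. -/

theorem digits_sum_add_pow_mul {b m n : ℕ} (hb : 1 < b) (hm : m < b ^ n) (q : ℕ) :
    (b.digits (m + b ^ n * q)).sum = (b.digits m).sum + (b.digits q).sum := by
  rcases q.eq_zero_or_pos with rfl | hq
  · simp
  · obtain ⟨k, rfl⟩ := Nat.exists_eq_add_of_le ((Nat.digits_length_le_iff hb m).2 hm)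
    simp [← Nat.digits_append_zeroes_append_digits hb hq]

theorem add_pow_mul_div_pow_mod {b n i : ℕ} (hb : 0 < b) (hi : i < n) (m q : ℕ) :
    (m + b ^ n * q) / b ^ i % b = m / b ^ i % b := by
  obtain ⟨l, rfl⟩ := Nat.exists_eq_add_of_lt hi
  have hsplit : m + b ^ (i + l + 1) * q = m + b ^ i * (b * (b ^ l * q)) := by ring
  rw [hsplit, Nat.add_mul_div_left _ _ (pow_pos hb i), Nat.add_mul_mod_self_left]

section Prime

variable {p : ℕ} [hp : Fact p.Prime]

/-- Kummer's theorem as an additive identity; the truncated subtraction in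
`sub_one_mul_padicValNat_choose_eq_sub_sum_digits'` hides that the digit sum is subadditive. -/
theorem digits_sum_add_eq_add_padicValNat_choose (m n : ℕ) :
    (p.digits m).sum + (p.digits n).sum =
      (p.digits (m + n)).sum + (p - 1) * padicValNat p ((m + n).choose n) := by
  have legendre (i : ℕ) : (p - 1) * padicValNat p i.factorial + (p.digits i).sum = i := by
    rw [sub_one_mul_padicValNat_factorial, Nat.sub_add_cancel (Nat.digit_sum_le p i)]
  have valuation : padicValNat p (m + n).factorial =
      padicValNat p ((m + n).choose n) + padicValNat p m.factorial +
        padicValNat p n.factorial := by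
    have hchoose : (m + n).choose n ≠ 0 := Nat.choose_ne_zero (Nat.le_add_left n m)
    rw [← Nat.add_choose_mul_factorial_mul_factorial m n,
      padicValNat.mul (mul_ne_zero hchoose m.factorial_ne_zero) n.factorial_ne_zero,
      padicValNat.mul hchoose m.factorial_ne_zero]
  linear_combination legendre m + legendre n - legendre (m + n) + (p - 1) * valuation

theorem digits_sum_add_sub_eq_iff_not_dvd_choose {k n : ℕ} (hkn : k ≤ n) :
    (p.digits k).sum + (p.digits (n - k)).sum = (p.digits n).sum ↔ ¬p ∣ n.choose k := by
  obtain ⟨m, rfl⟩ := Nat.exists_eq_add_of_le' hkn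
  have hp1 : p - 1 ≠ 0 := (Nat.sub_pos_of_lt hp.out.one_lt).ne'
  rw [Nat.add_sub_cancel, add_comm, digits_sum_add_eq_add_padicValNat_choose, Nat.add_eq_left,
    mul_eq_zero_iff_left hp1, dvd_iff_padicValNat_ne_zero (Nat.choose_ne_zero hkn), not_not]

theorem choose_add_pow_mul_modEq {n b d : ℕ} (hb : b < p ^ n) (hd : d < p ^ n) (a c : ℕ) :
    (b + p ^ n * a).choose (d + p ^ n * c) ≡ a.choose c * b.choose d [MOD p] := by
  have hpn : 0 < p ^ n := pow_pos hp.out.pos n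
  have digitwise : ∏ i ∈ Finset.range n,
        ((b + p ^ n * a) / p ^ i % p).choose ((d + p ^ n * c) / p ^ i % p) =
      ∏ i ∈ Finset.range n, (b / p ^ i % p).choose (d / p ^ i % p) :=
    Finset.prod_congr rfl fun i hi ↦ by
      simp only [add_pow_mul_div_pow_mod hp.out.pos (Finset.mem_range.1 hi)]
  have lucas := Choose.choose_modEq_choose_mul_prod_range_choose
    (p := p) (n := b + p ^ n * a) (k := d + p ^ n * c) n
  rw [Nat.add_mul_div_left _ _ hpn, Nat.add_mul_div_left _ _ hpn, Nat.div_eq_of_lt hb,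
    Nat.div_eq_of_lt hd, zero_add, zero_add] at lucas
  norm_cast at lucas
  rw [digitwise] at lucas
  exact lucas.trans ((Choose.choose_modEq_prod_range_choose_nat hb hd).symm.mul_left _)

end Prime

theorem le_and_s_add_s_sub_eq_iff_odd_choose (j k : ℕ) :
    k ≤ j ∧ s k + s (j - k) = s j ↔ Odd (j.choose k) := by
  rcases le_or_gt k j with hkj | hjk
  · simpa [s, hkj, ← even_iff_two_dvd] using
      digits_sum_add_sub_eq_iff_not_dvd_choose (p := 2) hkj
  · simp [hjk.not_ge, Nat.choose_eq_zero_of_lt hjk]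

theorem odd_choose_add_two_pow_mul_iff {n b d : ℕ} (hb : b < 2 ^ n) (hd : d < 2 ^ n) (a c : ℕ) :
    Odd ((b + 2 ^ n * a).choose (d + 2 ^ n * c)) ↔ Odd (a.choose c) ∧ Odd (b.choose d) := by
  rw [← Nat.odd_mul, Nat.odd_iff, Nat.odd_iff, choose_add_pow_mul_modEq hb hd a c]

theorem le_of_odd_choose {j k : ℕ} (h : Odd (j.choose k)) : k ≤ j :=
  Nat.choose_ne_zero_iff.1 h.pos.ne'

/-- The `(j, k)` entry of the infinite Sierpinski matrix of which every `Sₙ(x)` is the upper left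
corner: Pascal's triangle modulo 2, weighted by powers of `x`. Above the diagonal
`j - k` is truncated, but there `j.choose k = 0`. -/
def sierpinskiEntry {R : Type*} [MonoidWithZero R] (x : R) (j k : ℕ) : R :=
  if Odd (j.choose k) then x ^ s (j - k) else 0

theorem sierpinskiEntry_add_two_pow_mul {R : Type*} [MonoidWithZero R] (x : R) {n b d : ℕ}
    (hb : b < 2 ^ n) (hd : d < 2 ^ n) (a c : ℕ) :
    sierpinskiEntry x (b + 2 ^ n * a) (d + 2 ^ n * c) =
      sierpinskiEntry x a c * sierpinskiEntry x b d := by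
  by_cases h : Odd (a.choose c) ∧ Odd (b.choose d)
  · have hca : c ≤ a := le_of_odd_choose h.1
    have hdb : d ≤ b := le_of_odd_choose h.2
    have hsub : b + 2 ^ n * a - (d + 2 ^ n * c) = b - d + 2 ^ n * (a - c) := by
      rw [Nat.mul_sub, tsub_add_tsub_comm hdb (Nat.mul_le_mul_left _ hca)]
    have hs : s (b - d + 2 ^ n * (a - c)) = s (b - d) + s (a - c) :=
      digits_sum_add_pow_mul one_lt_two ((Nat.sub_le b d).trans_lt hb) _
    simp [sierpinskiEntry, odd_choose_add_two_pow_mul_iff hb hd, h, hsub, hs, ← pow_add, add_comm]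
  · rw [sierpinskiEntry, if_neg (mt (odd_choose_add_two_pow_mul_iff hb hd a c).1 h)]
    rcases not_and_or.1 h with hac | hbd
    · simp [sierpinskiEntry, hac]
    · simp [sierpinskiEntry, hbd]

theorem sierpinskiEntry_fin_two {R : Type*} [MonoidWithZero R] (x : R) (a c : Fin 2) :
    sierpinskiEntry x a c = !![1, 0; x, 1] a c := by
  fin_cases a <;> fin_cases c <;> simp [sierpinskiEntry, s]

theorem splitEquiv_val (n : ℕ) (a : Fin 2) (b : Fin (2 ^ n)) :
    (splitEquiv n (a, b) : ℕ) = b + 2 ^ n * a := rfl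

theorem sierpinskiMat_succ_splitEquiv {R : Type*} [CommRing R] (x : R) (n : ℕ) (a c : Fin 2)
    (b d : Fin (2 ^ n)) :
    sierpinskiMat x (n + 1) (splitEquiv n (a, b)) (splitEquiv n (c, d)) =
      !![1, 0; x, 1] a c * sierpinskiMat x n b d := by
  simp [sierpinskiMat]

theorem sierpinskiMat_eq_sierpinskiEntry {R : Type*} [CommRing R] (x : R) (n : ℕ)
    (j k : Fin (2 ^ n)) : sierpinskiMat x n j k = sierpinskiEntry x j k := by
  induction n with
  | zero =>
    obtain rfl : j = 0 := Fin.fin_one_eq_zero j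
    obtain rfl : k = 0 := Fin.fin_one_eq_zero k
    simp [sierpinskiMat, sierpinskiEntry, s]
  | succ n ih =>
    obtain ⟨⟨a, b⟩, rfl⟩ := (splitEquiv n).surjective j
    obtain ⟨⟨c, d⟩, rfl⟩ := (splitEquiv n).surjective k
    rw [sierpinskiMat_succ_splitEquiv, ih, splitEquiv_val, splitEquiv_val,
      sierpinskiEntry_add_two_pow_mul x b.isLt d.isLt, sierpinskiEntry_fin_two]

/-- For `n ≥ 1`, the `(j, k)` entry of `Sₙ(x)` equals `x^{s(j-k)}` if `k ≤ j`
and the pair `(k, j-k)` is carry-free (i.e. `s(k) + s(j-k) = s(j)`), and equals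
`0` otherwise. -/
theorem sierpinskiMat_entries {R : Type*} [CommRing R] (x : R) (n : ℕ) (hn : 1 ≤ n)
    (j k : Fin (2 ^ n)) :
    sierpinskiMat x n j k =
      if (k : ℕ) ≤ (j : ℕ) ∧ s (k : ℕ) + s ((j : ℕ) - (k : ℕ)) = s (j : ℕ) then
        x ^ s ((j : ℕ) - (k : ℕ))
      else 0 := by
  simp only [le_and_s_add_s_sub_eq_iff_odd_choose]
  exact sierpinskiMat_eq_sierpinskiEntry x n j k
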